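/- arXiv:2010.12103 — 2 statements merged into one kernel-verified Lean document; each statement's English description precedes it below -/
import Mathlib

section
/- Fix a sample S = (s_1,…,s_m). Let σ be an n×m random matrix whose entries σ_{j,i} are independent uniform Rademacher (±1) random variables. Then for every ε > 0, Pr_σ( R̂(F,S) ≥ R̂ⁿ_m(F,S,σ) + ε ) ≤ exp( − n m ε² / (2 z²) ). -/
open MeasureTheory

noncomputable section

/-- Map a Boolean to a `±1` sign: `true ↦ 1`, `false ↦ -1`. -/
def sgnB (x : Bool) : ℝ := if x then 1 else -1

/-- The `n`-Monte-Carlo Empirical Rademacher Average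
`R̂ⁿ_m(F,S,σ) = (1/n) Σ_j sup_{f∈F} (1/m) Σ_i σ_{j,i} f(s_i)`. -/
def mcera {X ι : Type*} (f : ι → X → ℝ) (n m : ℕ) (S : Fin m → X)
    (σ : Fin n → Fin m → Bool) : ℝ :=
  (n : ℝ)⁻¹ * ∑ j : Fin n, ⨆ l : ι, (m : ℝ)⁻¹ * ∑ k : Fin m, sgnB (σ j k) * f l (S k)

/-- Uniform measure on `n × m` sign matrices: the entries are independent
uniform Rademacher (±1) random variables. -/
def radMeasure (n m : ℕ) : Measure (Fin n → Fin m → Bool) :=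
  (PMF.uniformOfFintype (Fin n → Fin m → Bool)).toMeasure

/-- The Empirical Rademacher Average `R̂(F,S) = E_σ[R̂ⁿ_m(F,S,σ)]`. -/
def era {X ι : Type*} (f : ι → X → ℝ) (n m : ℕ) (S : Fin m → X) : ℝ :=
  ∫ σ, mcera f n m S σ ∂(radMeasure n m)

/-- The Rademacher Complexity `R(F,m) = E_S[R̂(F,S)]`, `S` being `m` i.i.d. samples. -/
def rc {X ι : Type*} [MeasurableSpace X] (f : ι → X → ℝ) (n m : ℕ) (μ : Measure X) : ℝ :=
  ∫ S : Fin m → X, era f n m S ∂(Measure.pi fun _ : Fin m => μ)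

/-- `ẑ(S) = sup_{f∈F, 1≤i≤m} |f(s_i)|`. -/
def zhat {X ι : Type*} (f : ι → X → ℝ) {m : ℕ} (S : Fin m → X) : ℝ :=
  ⨆ p : ι × Fin m, |f p.1 (S p.2)|

/-- `ν̂_F(S) = (1/m) sup_{f∈F} Σ_i |f(s_i)|`. -/
def nuhat {X ι : Type*} (f : ι → X → ℝ) {m : ℕ} (S : Fin m → X) : ℝ :=
  (m : ℝ)⁻¹ * ⨆ l : ι, ∑ k : Fin m, |f l (S k)|

/-- The empirical wimpy variance `σ̂²_F(S) = (1/m) sup_{f∈F} Σ_i f(s_i)²`. -/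
def sigma2hat {X ι : Type*} (f : ι → X → ℝ) {m : ℕ} (S : Fin m → X) : ℝ :=
  (m : ℝ)⁻¹ * ⨆ l : ι, ∑ k : Fin m, (f l (S k)) ^ 2

/-- The wimpy variance `σ²_F = sup_{f∈F} E_μ[f²]`. -/
def wimpyVar {X ι : Type*} [MeasurableSpace X] (f : ι → X → ℝ) (μ : Measure X) : ℝ :=
  ⨆ l : ι, ∫ x, (f l x) ^ 2 ∂μ

/-- The positive supremum deviation `SD⁺(F,S) = sup_{f∈F} ((1/m)Σ_i f(s_i) - E_μ[f])`. -/
def sdPlus {X ι : Type*} [MeasurableSpace X] (f : ι → X → ℝ) (μ : Measure X)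
    {m : ℕ} (S : Fin m → X) : ℝ :=
  ⨆ l : ι, ((m : ℝ)⁻¹ * ∑ k : Fin m, f l (S k) - ∫ x, f l x ∂μ)

/-- The negative supremum deviation `SD⁻(F,S) = sup_{f∈F} (E_μ[f] - (1/m)Σ_i f(s_i))`. -/
def sdMinus {X ι : Type*} [MeasurableSpace X] (f : ι → X → ℝ) (μ : Measure X)
    {m : ℕ} (S : Fin m → X) : ℝ :=
  ⨆ l : ι, ((∫ x, f l x ∂μ) - (m : ℝ)⁻¹ * ∑ k : Fin m, f l (S k))

/-- `η_F = sup_{f∈F} E_μ[f] - a`. -/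
def etaF {X ι : Type*} [MeasurableSpace X] (f : ι → X → ℝ) (μ : Measure X) (a : ℝ) : ℝ :=
  (⨆ l : ι, ∫ x, f l x ∂μ) - a

/-- `γ_F = b - inf_{f∈F} E_μ[f]`. -/
def gammaF {X ι : Type*} [MeasurableSpace X] (f : ι → X → ℝ) (μ : Measure X) (b : ℝ) : ℝ :=
  b - ⨅ l : ι, ∫ x, f l x ∂μ

/-- `η̂_F(S) = sup_{f∈F} (1/m) Σ_i f(s_i) - a`. -/
def etahat {X ι : Type*} (f : ι → X → ℝ) {m : ℕ} (S : Fin m → X) (a : ℝ) : ℝ :=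
  (⨆ l : ι, (m : ℝ)⁻¹ * ∑ k : Fin m, f l (S k)) - a

/-- `γ̂_F(S) = b - sup_{f∈F} (1/m) Σ_i f(s_i)`. -/
def gammahat {X ι : Type*} (f : ι → X → ℝ) {m : ℕ} (S : Fin m → X) (b : ℝ) : ℝ :=
  b - ⨆ l : ι, (m : ℝ)⁻¹ * ∑ k : Fin m, f l (S k)

/-- `h(x) = (1+x) ln(1+x) - x`. -/
def hfun (x : ℝ) : ℝ := (1 + x) * Real.log (1 + x) - x

/-- `g(σ) = n m R̂ⁿ_m(F,S,σ) = Σ_j sup_{f∈F} Σ_i σ_{j,i} f(s_i)`. -/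
def gup {X ι : Type*} (f : ι → X → ℝ) {n m : ℕ} (S : Fin m → X)
    (σ : Fin n → Fin m → Bool) : ℝ :=
  ∑ j : Fin n, ⨆ l : ι, ∑ k : Fin m, sgnB (σ j k) * f l (S k)

/-- `g_{j,i}(σ)`: infimum over `σ'_{j,i} ∈ {-1,1}` of `g` evaluated at `σ` with its
`(j,i)` entry replaced by `σ'_{j,i}`. -/
def gji {X ι : Type*} (f : ι → X → ℝ) {n m : ℕ} (S : Fin m → X)
    (σ : Fin n → Fin m → Bool) (j : Fin n) (i : Fin m) : ℝ :=
  min (gup f S (Function.update σ j (Function.update (σ j) i true)))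
      (gup f S (Function.update σ j (Function.update (σ j) i false)))

/-- `g(S) = m SD⁺(F,S) = sup_{f∈F} (Σ_i f(s_i) - m E_μ[f])`. -/
def gSDp {X ι : Type*} [MeasurableSpace X] (f : ι → X → ℝ) (μ : Measure X)
    {m : ℕ} (S : Fin m → X) : ℝ :=
  ⨆ l : ι, (∑ k : Fin m, f l (S k) - m * ∫ x, f l x ∂μ)

/-- `g_i(S) = inf_{s'_i ∈ X} g(s_1,…,s_{i-1},s'_i,s_{i+1},…,s_m)` for `g = m SD⁺`. -/
def gSDpi {X ι : Type*} [MeasurableSpace X] (f : ι → X → ℝ) (μ : Measure X)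
    {m : ℕ} (S : Fin m → X) (i : Fin m) : ℝ :=
  ⨅ s' : X, gSDp f μ (Function.update S i s')

/-- `g(S) = m SD⁻(F,S) = sup_{f∈F} (m E_μ[f] - Σ_i f(s_i))`. -/
def gSDm {X ι : Type*} [MeasurableSpace X] (f : ι → X → ℝ) (μ : Measure X)
    {m : ℕ} (S : Fin m → X) : ℝ :=
  ⨆ l : ι, ((m : ℝ) * (∫ x, f l x ∂μ) - ∑ k : Fin m, f l (S k))

/-- `g_i(S) = inf_{s'_i ∈ X} g(s_1,…,s_{i-1},s'_i,s_{i+1},…,s_m)` for `g = m SD⁻`. -/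
def gSDmi {X ι : Type*} [MeasurableSpace X] (f : ι → X → ℝ) (μ : Measure X)
    {m : ℕ} (S : Fin m → X) (i : Fin m) : ℝ :=
  ⨅ s' : X, gSDm f μ (Function.update S i s')

/-- `g(S) = m σ̂²_F(S) = sup_{f∈F} Σ_i f(s_i)²`. -/
def gWv {X ι : Type*} (f : ι → X → ℝ) {m : ℕ} (S : Fin m → X) : ℝ :=
  ⨆ l : ι, ∑ k : Fin m, (f l (S k)) ^ 2

/-- `g_j(S) = sup_{f∈F} Σ_{i≠j} f(s_i)²`. -/
def gWvj {X ι : Type*} (f : ι → X → ℝ) {m : ℕ} (S : Fin m → X) (j : Fin m) : ℝ :=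
  ⨆ l : ι, ∑ k ∈ Finset.univ.erase j, (f l (S k)) ^ 2

/-!
`R̂ⁿ_m(F,S,·)` has bounded differences `2z/(nm)` in each of the `nm` independent signs, because a
supremum moves by at most as much as its terms do. The theorem is therefore the lower-tail form of
McDiarmid's inequality, whose variance proxy here is `nm (z/(nm))² = z²/(nm)`.

McDiarmid's inequality holds by induction on the number of coordinates: write `g - E g` as
`(G - E G) + (g - G)`, where `G` is the mean of `g` given the first coordinate. The first term is
sub-Gaussian by Hoeffding's lemma, the second is so conditionally on the first coordinate by
induction, and the variance proxies add up under Fubini.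
-/

open ProbabilityTheory
open scoped NNReal

section SubgaussianMGF

variable {α β : Type*} [MeasurableSpace α] [MeasurableSpace β] {μ : Measure α} {ν : Measure β}

lemma hasSubgaussianMGF_sub_integral_of_abs_sub_le [IsProbabilityMeasure μ] {g : α → ℝ} {c : ℝ}
    (hg : AEMeasurable g μ) (hc : ∀ x y, |g x - g y| ≤ c) :
    HasSubgaussianMGF (fun x ↦ g x - ∫ y, g y ∂μ) ((‖c‖₊ / 2) ^ 2) μ := by
  have := nonempty_of_isProbabilityMeasure μ
  have lower_bound (x y : α) : g x - c ≤ g y := by linarith [(abs_le.1 (hc x y)).2]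
  have g_mem_Icc (x : α) : g x ∈ Set.Icc (⨅ y, g y) ((⨅ y, g y) + c) :=
    ⟨ciInf_le ⟨g x - c, Set.forall_mem_range.2 (lower_bound x)⟩ x,
      sub_le_iff_le_add.1 (le_ciInf (lower_bound x))⟩
  simpa only [add_sub_cancel_left] using
    hasSubgaussianMGF_of_mem_Icc hg (Filter.Eventually.of_forall g_mem_Icc)

lemma hasSubgaussianMGF_comp_sub_integral {g : β → ℝ} {φ : α → β} {c : ℝ≥0}
    (hφ : MeasurePreserving φ μ ν)
    (hg : HasSubgaussianMGF (fun y ↦ g y - ∫ y', g y' ∂ν) c ν) :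
    HasSubgaussianMGF (fun x ↦ g (φ x) - ∫ x', g (φ x') ∂μ) c μ := by
  have g_measurable : AEStronglyMeasurable g (μ.map φ) := by
    simpa only [hφ.map_eq, sub_add_cancel] using
      hg.aestronglyMeasurable.add_const (∫ y, g y ∂ν)
  rw [← hφ.map_eq] at hg
  simpa only [← integral_map hφ.aemeasurable g_measurable, Function.comp_def] using
    hg.of_map hφ.aemeasurable

lemma integrable_of_hasSubgaussianMGF_sub_const [IsFiniteMeasure μ] {g : α → ℝ} {a : ℝ} {c : ℝ≥0}
    (hg : HasSubgaussianMGF (fun x ↦ g x - a) c μ) : Integrable g μ := by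
  simpa only [Pi.add_def, sub_add_cancel] using hg.integrable.add (integrable_const a)

lemma integral_exp_mul_add_le {Z : β → ℝ} {c : ℝ≥0} (hZ : HasSubgaussianMGF Z c ν) (a t : ℝ) :
    ∫ y, Real.exp (t * (a + Z y)) ∂ν ≤ Real.exp (t * a) * Real.exp (c * t ^ 2 / 2) := by
  simp only [mul_add, Real.exp_add, integral_const_mul]
  gcongr
  exact hZ.mgf_le t

lemma integrable_exp_mul_add_prod [SFinite ν] {X : α → ℝ} {Y : α × β → ℝ}
    {cX cY : ℝ≥0} (hX : HasSubgaussianMGF X cX μ) (hYm : AEStronglyMeasurable Y (μ.prod ν))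
    (hY : ∀ᵐ x ∂μ, HasSubgaussianMGF (fun y ↦ Y (x, y)) cY ν) (t : ℝ) :
    Integrable (fun p ↦ Real.exp (t * (X p.1 + Y p))) (μ.prod ν) := by
  have exp_measurable :
      AEStronglyMeasurable (fun p ↦ Real.exp (t * (X p.1 + Y p))) (μ.prod ν) :=
    Real.continuous_exp.comp_aestronglyMeasurable
      ((hX.aestronglyMeasurable.comp_fst.add hYm).const_mul t)
  refine (integrable_prod_iff exp_measurable).2 ⟨?_, ?_⟩
  · filter_upwards [hY] with x hYx
    simpa only [mul_add, Real.exp_add] using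
      (hYx.integrable_exp_mul t).const_mul (Real.exp (t * X x))
  · refine ((hX.integrable_exp_mul t).mul_const (Real.exp (cY * t ^ 2 / 2))).mono'
      exp_measurable.norm.integral_prod_right' ?_
    filter_upwards [hY] with x hYx
    simp only [Real.norm_eq_abs, Real.abs_exp]
    rw [abs_of_nonneg (integral_nonneg fun y ↦ (Real.exp_pos _).le)]
    exact integral_exp_mul_add_le hYx (X x) t

lemma hasSubgaussianMGF_add_prod [SFinite μ] [SFinite ν] {X : α → ℝ} {Y : α × β → ℝ}
    {cX cY : ℝ≥0} (hX : HasSubgaussianMGF X cX μ) (hYm : AEStronglyMeasurable Y (μ.prod ν))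
    (hY : ∀ᵐ x ∂μ, HasSubgaussianMGF (fun y ↦ Y (x, y)) cY ν) :
    HasSubgaussianMGF (fun p ↦ X p.1 + Y p) (cX + cY) (μ.prod ν) where
  integrable_exp_mul := integrable_exp_mul_add_prod hX hYm hY
  mgf_le t := by
    have exp_integrable := integrable_exp_mul_add_prod hX hYm hY t
    calc mgf (fun p ↦ X p.1 + Y p) (μ.prod ν) t
        = ∫ x, ∫ y, Real.exp (t * (X x + Y (x, y))) ∂ν ∂μ := integral_prod _ exp_integrable
      _ ≤ ∫ x, Real.exp (t * X x) * Real.exp (cY * t ^ 2 / 2) ∂μ :=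
        integral_mono_ae exp_integrable.integral_prod_left
          ((hX.integrable_exp_mul t).mul_const _)
          (hY.mono fun x hYx ↦ integral_exp_mul_add_le hYx (X x) t)
      _ = mgf X μ t * Real.exp (cY * t ^ 2 / 2) := integral_mul_const _ _
      _ ≤ Real.exp (cX * t ^ 2 / 2) * Real.exp (cY * t ^ 2 / 2) := by
        gcongr
        exact hX.mgf_le t
      _ = Real.exp ((cX + cY : ℝ≥0) * t ^ 2 / 2) := by
        rw [← Real.exp_add, NNReal.coe_add, add_mul, add_div]

lemma hasSubgaussianMGF_prod_sub_integral [IsFiniteMeasure μ] [IsFiniteMeasure ν]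
    {g : α × β → ℝ} {cX cY : ℝ≥0} (hg : AEStronglyMeasurable g (μ.prod ν))
    (hX : HasSubgaussianMGF
      (fun x ↦ ∫ y, g (x, y) ∂ν - ∫ x', ∫ y, g (x', y) ∂ν ∂μ) cX μ)
    (hY : ∀ᵐ x ∂μ, HasSubgaussianMGF (fun y ↦ g (x, y) - ∫ y', g (x, y') ∂ν) cY ν) :
    HasSubgaussianMGF (fun p ↦ g p - ∫ q, g q ∂(μ.prod ν)) (cX + cY) (μ.prod ν) := by
  have subgaussian_sub_iterated : HasSubgaussianMGF
      (fun p ↦ g p - ∫ x, ∫ y, g (x, y) ∂ν ∂μ) (cX + cY) (μ.prod ν) := by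
    have key := hasSubgaussianMGF_add_prod hX (hg.sub hg.integral_prod_right'.comp_fst) hY
    refine key.congr (.of_forall fun p ↦ ?_)
    simp only [Pi.sub_apply]
    ring
  rwa [integral_prod g (integrable_of_hasSubgaussianMGF_sub_const subgaussian_sub_iterated)]

lemma abs_integral_sub_integral_le [IsProbabilityMeasure μ] {u v : α → ℝ} {r : ℝ}
    (hu : Integrable u μ) (hv : Integrable v μ) (huv : ∀ x, |u x - v x| ≤ r) :
    |∫ x, u x ∂μ - ∫ x, v x ∂μ| ≤ r := by
  rw [← integral_sub hu hv]
  simpa only [Real.norm_eq_abs, probReal_univ, mul_one] using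
    norm_integral_le_of_norm_le_const (μ := μ) (f := fun x ↦ u x - v x) (.of_forall huv)

lemma hasSubgaussianMGF_prod_sub_integral_of_abs_sub_le [IsProbabilityMeasure μ]
    [IsProbabilityMeasure ν] {g : α × β → ℝ} {c : ℝ} {C : ℝ≥0} (hg : Measurable g)
    (hX : ∀ x x' y, |g (x, y) - g (x', y)| ≤ c)
    (hY : ∀ x, HasSubgaussianMGF (fun y ↦ g (x, y) - ∫ y', g (x, y') ∂ν) C ν) :
    HasSubgaussianMGF (fun p ↦ g p - ∫ q, g q ∂(μ.prod ν)) ((‖c‖₊ / 2) ^ 2 + C)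
      (μ.prod ν) := by
  have section_integrable (x : α) : Integrable (fun y ↦ g (x, y)) ν :=
    integrable_of_hasSubgaussianMGF_sub_const (hY x)
  have marginal_subgaussian := hasSubgaussianMGF_sub_integral_of_abs_sub_le (μ := μ)
    hg.stronglyMeasurable.integral_prod_right'.measurable.aemeasurable fun x x' ↦
      abs_integral_sub_integral_le (section_integrable x) (section_integrable x') (hX x x')
  exact hasSubgaussianMGF_prod_sub_integral hg.aestronglyMeasurable marginal_subgaussian
    (.of_forall hY)

end SubgaussianMGF

lemma abs_iSup_sub_iSup_le {ι : Type*} [Nonempty ι] {u v : ι → ℝ} {r : ℝ}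
    (hu : BddAbove (Set.range u)) (hv : BddAbove (Set.range v)) (huv : ∀ l, |u l - v l| ≤ r) :
    |(⨆ l, u l) - ⨆ l, v l| ≤ r := by
  have hul : ⨆ l, u l ≤ r + ⨆ l, v l := ciSup_le fun l ↦ by
    linarith [(abs_le.1 (huv l)).2, le_ciSup hv l]
  have hvl : ⨆ l, v l ≤ r + ⨆ l, u l := ciSup_le fun l ↦ by
    linarith [(abs_le.1 (huv l)).1, le_ciSup hu l]
  exact abs_sub_le_iff.2 ⟨by linarith, by linarith⟩

/-- The bounded differences property of McDiarmid's inequality: changing only the `i`-th coordinate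
changes the value of `g` by at most `c i`. -/
def HasBoundedDifferences {κ : Type*} {Ω : κ → Type*} (g : (∀ i, Ω i) → ℝ) (c : κ → ℝ) : Prop :=
  ∀ (i : κ) (x y : ∀ i, Ω i), (∀ j ≠ i, x j = y j) → |g x - g y| ≤ c i

namespace HasBoundedDifferences

variable {κ : Type*} {Ω : κ → Type*} {g : (∀ i, Ω i) → ℝ} {c : κ → ℝ}

lemma comp_piCongrLeft {κ' : Type*} (hg : HasBoundedDifferences g c) (e : κ' ≃ κ) :
    HasBoundedDifferences (fun x ↦ g (Equiv.piCongrLeft Ω e x)) (fun i ↦ c (e i)) := by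
  intro i x y hxy
  refine hg (e i) _ _ fun j hj ↦ ?_
  obtain ⟨j, rfl⟩ := e.surjective j
  simpa only [Equiv.piCongrLeft_apply_apply] using hxy j (ne_of_apply_ne e hj)

lemma hasSubgaussianMGF_fin {N : ℕ} {Ω : Fin N → Type*} [∀ i, MeasurableSpace (Ω i)]
    {μ : ∀ i, Measure (Ω i)} [∀ i, IsProbabilityMeasure (μ i)] {g : (∀ i, Ω i) → ℝ}
    {c : Fin N → ℝ} (hg : HasBoundedDifferences g c) (hgm : Measurable g) :
    HasSubgaussianMGF (fun x ↦ g x - ∫ y, g y ∂(Measure.pi μ)) (∑ i, (‖c i‖₊ / 2) ^ 2)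
      (Measure.pi μ) := by
  induction N with
  | zero =>
    have g_centered (x : ∀ i, Ω i) : g x - ∫ y, g y ∂(Measure.pi μ) = 0 := by
      rw [integral_congr_ae (.of_forall fun y ↦ congrArg g (Subsingleton.elim y x))]
      simp
    simpa only [g_centered, Finset.univ_eq_empty, Finset.sum_empty] using
      HasSubgaussianMGF.fun_zero
  | succ N ih =>
    let e := MeasurableEquiv.piFinSuccAbove Ω 0
    let ν := Measure.pi fun i : Fin N ↦ μ (Fin.succAbove 0 i)
    let h : Ω 0 × (∀ i : Fin N, Ω (Fin.succAbove 0 i)) → ℝ := fun p ↦ g (e.symm p)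
    have h_measurable : Measurable h := hgm.comp e.symm.measurable
    have tail_subgaussian (x : Ω 0) : HasSubgaussianMGF (fun y ↦ h (x, y) - ∫ y', h (x, y') ∂ν)
        (∑ i : Fin N, (‖c (Fin.succAbove 0 i)‖₊ / 2) ^ 2) ν := by
      refine ih (fun i y y' hyy' ↦ hg (Fin.succAbove 0 i) _ _ fun j hj ↦ ?_)
        (h_measurable.comp measurable_prodMk_left)
      obtain rfl | ⟨j, rfl⟩ := Fin.eq_self_or_eq_succAbove 0 j
      · rfl
      · exact hyy' j (ne_of_apply_ne _ hj)
    have head_difference (x x' : Ω 0) (y : ∀ i : Fin N, Ω (Fin.succAbove 0 i)) :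
        |h (x, y) - h (x', y)| ≤ c 0 := by
      refine hg 0 _ _ fun j hj ↦ ?_
      obtain ⟨j, rfl⟩ := Fin.exists_succAbove_eq hj
      rfl
    have h_subgaussian := hasSubgaussianMGF_prod_sub_integral_of_abs_sub_le (μ := μ 0)
      h_measurable head_difference tail_subgaussian
    simpa only [h, e, MeasurableEquiv.symm_apply_apply, Fin.sum_univ_succAbove _ 0] using
      hasSubgaussianMGF_comp_sub_integral (measurePreserving_piFinSuccAbove μ 0) h_subgaussian

/-- **McDiarmid's inequality**, in moment generating function form. -/
lemma hasSubgaussianMGF [Fintype κ] [∀ i, MeasurableSpace (Ω i)]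
    {μ : ∀ i, Measure (Ω i)} [∀ i, IsProbabilityMeasure (μ i)]
    (hg : HasBoundedDifferences g c) (hgm : Measurable g) :
    HasSubgaussianMGF (fun x ↦ g x - ∫ y, g y ∂(Measure.pi μ)) (∑ i, (‖c i‖₊ / 2) ^ 2)
      (Measure.pi μ) := by
  let e := (Fintype.equivFin κ).symm
  let E := MeasurableEquiv.piCongrLeft Ω e
  have reindexed := (hg.comp_piCongrLeft e).hasSubgaussianMGF_fin (μ := fun i ↦ μ (e i))
    (hgm.comp E.measurable)
  rw [e.sum_comp fun i ↦ (‖c i‖₊ / 2) ^ 2] at reindexed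
  have E_symm_preserving := (measurePreserving_piCongrLeft μ e).symm E
  simpa only [E, ← MeasurableEquiv.coe_piCongrLeft, MeasurableEquiv.apply_symm_apply] using
    hasSubgaussianMGF_comp_sub_integral E_symm_preserving reindexed

lemma const_mul {r : ℝ} (hr : 0 ≤ r) (hg : HasBoundedDifferences g c) :
    HasBoundedDifferences (fun x ↦ r * g x) (fun i ↦ r * c i) := by
  intro i x y hxy
  rw [← mul_sub, abs_mul, abs_of_nonneg hr]
  exact mul_le_mul_of_nonneg_left (hg i x y hxy) hr

lemma sum_apply [Fintype κ] {u : ∀ k, Ω k → ℝ} (hu : ∀ k a b, |u k a - u k b| ≤ c k) :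
    HasBoundedDifferences (fun x : ∀ k, Ω k ↦ ∑ k, u k (x k)) c := by
  intro i x y hxy
  rw [← Finset.sum_sub_distrib, Fintype.sum_eq_single i fun j hj ↦ by rw [hxy j hj, sub_self]]
  exact hu i (x i) (y i)

lemma iSup {ι : Type*} [Nonempty ι] {g : ι → (∀ i, Ω i) → ℝ}
    (hg : ∀ l, HasBoundedDifferences (g l) c) (hbdd : ∀ x, BddAbove (Set.range fun l ↦ g l x)) :
    HasBoundedDifferences (fun x ↦ ⨆ l, g l x) c :=
  fun i x y hxy ↦ abs_iSup_sub_iSup_le (hbdd x) (hbdd y) fun l ↦ hg l i x y hxy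

lemma sum_rows {ι α : Type*} [Fintype ι] {g : (κ → α) → ℝ} (hg : HasBoundedDifferences g c) :
    HasBoundedDifferences (fun σ : ι × κ → α ↦ ∑ j, g fun k ↦ σ (j, k)) (fun p ↦ c p.2) := by
  rintro ⟨i, k⟩ σ τ hστ
  have other_rows_eq (j : ι) (hj : j ≠ i) : (fun k' ↦ σ (j, k')) = fun k' ↦ τ (j, k') :=
    funext fun k' ↦ hστ (j, k') (ne_of_apply_ne Prod.fst hj)
  rw [← Finset.sum_sub_distrib,
    Fintype.sum_eq_single i fun j hj ↦ by rw [other_rows_eq j hj, sub_self]]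
  exact hg k _ _ fun k' hk' ↦ hστ (i, k') (ne_of_apply_ne Prod.snd hk')

end HasBoundedDifferences

lemma measurePreserving_uncurry_radMeasure (n m : ℕ) :
    MeasurePreserving (Function.uncurry : (Fin n → Fin m → Bool) → Fin n × Fin m → Bool)
      (radMeasure n m) (Measure.pi fun _ ↦ (PMF.uniformOfFintype Bool).toMeasure) := by
  refine ⟨measurable_of_countable _, Measure.ext_of_singleton fun σ ↦ ?_⟩
  have preimage_singleton : Function.uncurry ⁻¹' {σ} = {Function.curry σ} :=
    Set.ext fun τ ↦ (Equiv.curry (Fin n) (Fin m) Bool).symm_apply_eq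
  rw [Measure.map_apply (measurable_of_countable _) (measurableSet_singleton σ),
    preimage_singleton]
  simp [radMeasure, Measure.pi_singleton, pow_mul, ENNReal.inv_pow, mul_comm n m]

lemma hasBoundedDifferences_iSup_signed_sum {ι κ : Type*} [Nonempty ι] [Fintype κ]
    {v : ι → κ → ℝ} {r z : ℝ} (hr : 0 ≤ r) (hv : ∀ l k, |v l k| ≤ z) :
    HasBoundedDifferences (fun ρ : κ → Bool ↦ ⨆ l, r * ∑ k, sgnB (ρ k) * v l k)
      (fun _ ↦ r * (2 * z)) := by
  have abs_term_le (l : ι) (k : κ) (s : Bool) : |sgnB s * v l k| ≤ z := by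
    cases s <;> simpa [sgnB] using hv l k
  refine .iSup (fun l ↦ .const_mul hr <| .sum_apply (u := fun k s ↦ sgnB s * v l k)
    fun k s s' ↦ ?_) fun ρ ↦ ?_
  · linarith [abs_sub (sgnB s * v l k) (sgnB s' * v l k), abs_term_le l k s, abs_term_le l k s']
  · refine ⟨r * ∑ _k : κ, z, Set.forall_mem_range.2 fun l ↦ ?_⟩
    gcongr with k
    exact le_of_abs_le (abs_term_le l k (ρ k))

section Rademacher

variable {X ι : Type*} [Nonempty ι] {f : ι → X → ℝ} {m : ℕ} {S : Fin m → X} {z : ℝ}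

lemma hasBoundedDifferences_mcera (hf : ∀ l k, |f l (S k)| ≤ z) (n : ℕ) :
    HasBoundedDifferences
      (fun σ : Fin n × Fin m → Bool ↦ mcera f n m S (Function.curry σ))
      (fun _ ↦ (n : ℝ)⁻¹ * ((m : ℝ)⁻¹ * (2 * z))) :=
  .const_mul (by positivity) (.sum_rows (hasBoundedDifferences_iSup_signed_sum (by positivity) hf))

lemma hasSubgaussianMGF_mcera_sub_era (hf : ∀ l k, |f l (S k)| ≤ z) (n : ℕ) :
    HasSubgaussianMGF (fun σ ↦ mcera f n m S σ - era f n m S) (‖z‖₊ ^ 2 / (n * m))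
      (radMeasure n m) := by
  have variance_proxy : ∑ _p : Fin n × Fin m, (‖(n : ℝ)⁻¹ * ((m : ℝ)⁻¹ * (2 * z))‖₊ / 2) ^ 2 =
      ‖z‖₊ ^ 2 / (n * m) := by
    simp only [nnnorm_mul, nnnorm_inv, Real.nnnorm_natCast, Real.nnnorm_ofNat, Finset.sum_const,
      Finset.card_univ, Fintype.card_prod, Fintype.card_fin, nsmul_eq_mul, Nat.cast_mul]
    field_simp
  have uncurried := hasSubgaussianMGF_comp_sub_integral (measurePreserving_uncurry_radMeasure n m)
    ((hasBoundedDifferences_mcera hf n).hasSubgaussianMGF (measurable_of_countable _))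
  simpa only [era, Function.curry_uncurry, variance_proxy] using uncurried

end Rademacher

theorem stmt_0_general {X ι : Type*} [Nonempty ι] {f : ι → X → ℝ} {n m : ℕ} (hn : 0 < n)
    (hm : 0 < m) {S : Fin m → X} {z : ℝ} (hz : 0 < z) (hf : ∀ l k, |f l (S k)| ≤ z)
    {ε : ℝ} (hε : 0 ≤ ε) :
    (radMeasure n m {σ | era f n m S ≥ mcera f n m S σ + ε}).toReal ≤
      Real.exp (-(n * m * ε ^ 2) / (2 * z ^ 2)) := by
  have tail := (hasSubgaussianMGF_mcera_sub_era hf n).neg.measure_ge_le hε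
  have event_eq : {σ | era f n m S ≥ mcera f n m S σ + ε} =
      {σ | ε ≤ (-fun σ ↦ mcera f n m S σ - era f n m S) σ} := by
    ext σ
    simp only [Set.mem_ofPred_eq, Pi.neg_apply, neg_sub, ge_iff_le, le_sub_iff_add_le']
  have exponent_eq : -(n * m * ε ^ 2) / (2 * z ^ 2) =
      -ε ^ 2 / (2 * (‖z‖₊ ^ 2 / (n * m) : ℝ≥0)) := by
    simp only [NNReal.coe_div, NNReal.coe_mul, NNReal.coe_pow, NNReal.coe_natCast, coe_nnnorm,
      Real.norm_eq_abs, sq_abs]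
    field_simp
  rwa [event_eq, exponent_eq]

theorem stmt_0 {X : Type*} [MeasurableSpace X] {ι : Type*} [Countable ι]
    (f : ι → X → ℝ) (a b : ℝ) (ha : a ≤ 0) (hb : 0 < b)
    (hmeas : ∀ l : ι, Measurable (f l))
    (hrange : ∀ (l : ι) (x : X), f l x ∈ Set.Icc a b)
    (hzero : ∃ l₀ : ι, ∀ x : X, f l₀ x = 0)
    (n m : ℕ) (hn : 0 < n) (hm : 0 < m) (S : Fin m → X) (ε : ℝ) (hε : 0 < ε) :
    (radMeasure n m
        {σ : Fin n → Fin m → Bool | era f n m S ≥ mcera f n m S σ + ε}).toReal ≤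
      Real.exp (-((n : ℝ) * (m : ℝ) * ε ^ 2) / (2 * (max |a| |b|) ^ 2)) := by
  obtain ⟨l₀, -⟩ := hzero
  have : Nonempty ι := ⟨l₀⟩
  exact stmt_0_general hn hm (lt_max_of_lt_right (abs_pos.2 hb.ne'))
    (fun l k ↦ abs_le_max_abs_abs (hrange l (S k)).1 (hrange l (S k)).2) hε.le
end
end

section
/- Let S = (s_1,…,s_m) be m i.i.d. samples from μ. For all 0 < ε ≤ R(F,m), Pr_S( R(F,m) ≥ R̂(F,S) + ε ) ≤ exp( − (m R(F,m)/c) · h( − ε / R(F,m) ) ) ≤ exp( − m ε² / (2 c R(F,m)) ), where h(x) = (1+x)ln(1+x) − x. -/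
/-!
Scaled by `m / c`, the empirical Rademacher average is a self-bounding function of the sample: let
`Zᵢ` be the same average without the `i`-th point. Pairing each sign vector with the one whose
`i`-th sign is flipped gives `0 ≤ Z - Zᵢ ≤ (b - a) / (2 c)`, and leaving one point out at a time
inside the supremum gives `∑ (Z - Zᵢ) ≤ Z`.

For self-bounding functions the entropy method yields a Poissonian lower tail. Subadditivity of
entropy gives the modified logarithmic Sobolev inequality
`Ent(exp (t Z)) ≤ ∑ E[exp (t Z) φ(t Zᵢ - t Z)]` with `φ(x) = exp x - x - 1`, and convexity of `φ`
turns it into `(1 - exp (-t)) L'(t) ≤ L(t)` for `L(t) = log E[exp (t Z)]`. Thus `L(t) / (exp t - 1)`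
is nonincreasing for `t < 0`, with limit `E Z` at `0`, so `L(t) ≤ (exp t - 1) E Z`, and Chernoff's
bound at `t = log (1 - u)` is `Pr(Z ≤ (1 - u) E Z) ≤ exp (-(E Z) h(-u))`; for `u = 1` let
`t → -∞`. Finally, `h(-u) ≥ u² / 2` on `[0, 1]` reduces to `s ≤ sinh s`.
-/

open MeasureTheory

noncomputable section

section Entropy

open Function ProbabilityTheory Real

/-- Bounded measurable real functions: a class closed under the operations of the entropy method and
integrable for every finite measure. The bound is pointwise rather than almost everywhere, so that
it passes to sections and to partial integrals. -/
structure BddMeas {α : Type*} [MeasurableSpace α] (g : α → ℝ) : Prop where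
  measurable : Measurable g
  bounded : ∃ C : ℝ, ∀ x, |g x| ≤ C

namespace BddMeas

variable {α β : Type*} [MeasurableSpace α] [MeasurableSpace β] {g h : α → ℝ}

lemma integrable (hg : BddMeas g) (μ : Measure α) [IsFiniteMeasure μ] : Integrable g μ :=
  let ⟨C, hC⟩ := hg.bounded
  .of_bound hg.measurable.aestronglyMeasurable C (.of_forall hC)

lemma const (c : ℝ) : BddMeas (fun _ : α => c) := ⟨measurable_const, |c|, fun _ => le_rfl⟩

lemma add (hg : BddMeas g) (hh : BddMeas h) : BddMeas (fun x => g x + h x) := by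
  obtain ⟨C, hC⟩ := hg.bounded
  obtain ⟨D, hD⟩ := hh.bounded
  exact ⟨hg.measurable.add hh.measurable, C + D,
    fun x => (abs_add_le _ _).trans (add_le_add (hC x) (hD x))⟩

lemma mul (hg : BddMeas g) (hh : BddMeas h) : BddMeas (fun x => g x * h x) := by
  obtain ⟨C, hC⟩ := hg.bounded
  obtain ⟨D, hD⟩ := hh.bounded
  refine ⟨hg.measurable.mul hh.measurable, C * D, fun x => ?_⟩
  rw [abs_mul]
  exact mul_le_mul (hC x) (hD x) (abs_nonneg _) ((abs_nonneg _).trans (hC x))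

lemma const_mul (c : ℝ) (hg : BddMeas g) : BddMeas (fun x => c * g x) := (const c).mul hg

lemma sub (hg : BddMeas g) (hh : BddMeas h) : BddMeas (fun x => g x - h x) := by
  simpa [sub_eq_add_neg] using hg.add (hh.const_mul (-1))

lemma sum {κ : Type*} (s : Finset κ) {g : κ → α → ℝ} (hg : ∀ k, BddMeas (g k)) :
    BddMeas (fun x => ∑ k ∈ s, g k x) := by
  choose C hC using fun k => (hg k).bounded
  exact ⟨Finset.measurable_sum _ fun k _ => (hg k).measurable, ∑ k ∈ s, C k, fun x =>
    (Finset.abs_sum_le_sum_abs _ _).trans (Finset.sum_le_sum fun k _ => hC k x)⟩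

lemma exp (hg : BddMeas g) : BddMeas (fun x => Real.exp (g x)) := by
  obtain ⟨C, hC⟩ := hg.bounded
  refine ⟨hg.measurable.exp, Real.exp C, fun x => ?_⟩
  rw [abs_exp]
  exact exp_le_exp.2 ((le_abs_self _).trans (hC x))

lemma comp (hg : BddMeas g) {u : β → α} (hu : Measurable u) : BddMeas (fun x => g (u x)) :=
  let ⟨C, hC⟩ := hg.bounded
  ⟨hg.measurable.comp hu, C, fun x => hC (u x)⟩

lemma integral_comp (hg : BddMeas g) {μ : Measure α} {ν : Measure β} {u : β → α}
    (hu : MeasurePreserving u ν μ) : ∫ y, g (u y) ∂ν = ∫ x, g x ∂μ := by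
  rw [← hu.map_eq, integral_map hu.measurable.aemeasurable hg.measurable.aestronglyMeasurable]

variable {z : α × β → ℝ}

lemma prodMk_left (hz : BddMeas z) (x : α) : BddMeas (fun y => z (x, y)) :=
  hz.comp measurable_prodMk_left

lemma prodMk_right (hz : BddMeas z) (y : β) : BddMeas (fun x => z (x, y)) :=
  hz.comp measurable_prodMk_right

lemma integral_right (hz : BddMeas z) (ν : Measure β) [IsProbabilityMeasure ν] :
    BddMeas (fun x => ∫ y, z (x, y) ∂ν) := by
  obtain ⟨C, hC⟩ := hz.bounded
  refine ⟨(hz.measurable.stronglyMeasurable.integral_prod_right' (ν := ν)).measurable, C,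
    fun x => ?_⟩
  simpa using norm_integral_le_of_norm_le_const (μ := ν) (f := fun y => z (x, y)) (C := C)
    (.of_forall fun y => hC (x, y))

lemma log_integral_exp (hz : BddMeas z) (ν : Measure β) [IsProbabilityMeasure ν] :
    BddMeas (fun x => log (∫ y, Real.exp (z (x, y)) ∂ν)) := by
  have hint x : Integrable (fun y => Real.exp (z (x, y))) ν := (hz.prodMk_left x).exp.integrable ν
  obtain ⟨C, hC⟩ := hz.bounded
  refine ⟨(hz.exp.integral_right ν).measurable.log, C, fun x => ?_⟩
  have lower : Real.exp (-C) ≤ ∫ y, Real.exp (z (x, y)) ∂ν := by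
    simpa using integral_mono (integrable_const (μ := ν) (Real.exp (-C))) (hint x)
      (fun y => exp_le_exp.2 (abs_le.1 (hC (x, y))).1)
  have upper : ∫ y, Real.exp (z (x, y)) ∂ν ≤ Real.exp C := by
    simpa using integral_mono (hint x) (integrable_const (μ := ν) (Real.exp C))
      (fun y => exp_le_exp.2 (abs_le.1 (hC (x, y))).2)
  have pos := (exp_pos _).trans_le lower
  exact abs_le.2 ⟨(le_log_iff_exp_le pos).2 lower, (log_le_iff_le_exp pos).2 upper⟩

end BddMeas

/-- The entropy `Ent_μ(g) = E[g log g] - E[g] log E[g]` of a nonnegative function. -/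
def entropy {α : Type*} [MeasurableSpace α] (μ : Measure α) (g : α → ℝ) : ℝ :=
  ∫ x, g x * log (g x) ∂μ - (∫ x, g x ∂μ) * log (∫ x, g x ∂μ)

/-- `φ(x) = eˣ - x - 1`, the remainder of the first-order expansion of the exponential. -/
def expRemainder (x : ℝ) : ℝ := exp x - x - 1

lemma expRemainder_nonneg (x : ℝ) : 0 ≤ expRemainder x := by
  rw [expRemainder]
  linarith [add_one_le_exp x]

/-- Convexity of `φ` together with `φ(0) = 0`. -/
lemma expRemainder_mul_le {u : ℝ} (hu₀ : 0 ≤ u) (hu₁ : u ≤ 1) (x : ℝ) :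
    expRemainder (u * x) ≤ u * expRemainder x := by
  have hconv := convexOn_exp.2 (Set.mem_univ x) (Set.mem_univ 0) hu₀ (sub_nonneg.2 hu₁) (by ring)
  simp only [smul_eq_mul, mul_zero, add_zero, exp_zero, mul_one] at hconv
  simp only [expRemainder]
  linarith

lemma entropy_exp {α : Type*} [MeasurableSpace α] (μ : Measure α) (z : α → ℝ) :
    entropy μ (fun x => exp (z x))
      = ∫ x, exp (z x) * z x ∂μ - (∫ x, exp (z x) ∂μ) * log (∫ x, exp (z x) ∂μ) := by
  simp only [entropy, log_exp]

variable {α β : Type*} [MeasurableSpace α] [MeasurableSpace β]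
  {μ : Measure α} [IsProbabilityMeasure μ] {ν : Measure β} [IsProbabilityMeasure ν]

lemma BddMeas.entropy_exp {z : α × β → ℝ} (hz : BddMeas z) :
    BddMeas (fun x => entropy ν (fun y => Real.exp (z (x, y)))) := by
  simp only [_root_.entropy_exp]
  exact ((hz.exp.mul hz).integral_right ν).sub
    ((hz.exp.integral_right ν).mul (hz.log_integral_exp ν))

/-- The duality formula for entropy, obtained by integrating `1 + t ≤ exp t`. -/
lemma integral_exp_mul_le_entropy_add {z u : α → ℝ} (hz : BddMeas z) (hu : BddMeas u) :
    ∫ x, exp (z x) * u x ∂μ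
      ≤ entropy μ (fun x => exp (z x)) + (∫ x, exp (z x) ∂μ) * log (∫ x, exp (u x) ∂μ) := by
  have hM : 0 < ∫ x, exp (z x) ∂μ := integral_exp_pos (hz.exp.integrable μ)
  have hN : 0 < ∫ x, exp (u x) ∂μ := integral_exp_pos (hu.exp.integrable μ)
  rw [entropy_exp]
  set M := ∫ x, exp (z x) ∂μ
  set N := ∫ x, exp (u x) ∂μ
  have pointwise x : exp (z x) * u x - exp (z x) * z x + exp (z x) * (log M - log N + 1)
      ≤ M / N * exp (u x) := by
    have hexp : M / N * exp (u x) = exp (z x) * exp (u x - z x + (log M - log N)) := by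
      rw [← exp_add, show z x + (u x - z x + (log M - log N)) = u x + log M - log N by ring,
        exp_sub, exp_add, exp_log hM, exp_log hN]
      ring
    rw [hexp, ← mul_sub, ← mul_add]
    gcongr
    linarith [add_one_le_exp (u x - z x + (log M - log N))]
  have hzu := hz.exp.mul hu
  have hzz := hz.exp.mul hz
  have integrated := integral_mono
    (((hzu.sub hzz).add (hz.exp.mul (.const _))).integrable μ)
    ((hu.exp.const_mul _).integrable μ) pointwise
  rw [integral_add ((hzu.sub hzz).integrable μ) ((hz.exp.mul (.const _)).integrable μ),
    integral_sub (hzu.integrable μ) (hzz.integrable μ), integral_mul_const, integral_const_mul,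
    div_mul_cancel₀ M hN.ne'] at integrated
  linarith

lemma entropy_exp_le_integral_expRemainder {z : α → ℝ} (hz : BddMeas z) (w : ℝ) :
    entropy μ (fun x => exp (z x)) ≤ ∫ x, exp (z x) * expRemainder (w - z x) ∂μ := by
  have hM : 0 < ∫ x, exp (z x) ∂μ := integral_exp_pos (hz.exp.integrable μ)
  have expand : ∫ x, exp (z x) * expRemainder (w - z x) ∂μ
      = exp w + ∫ x, exp (z x) * z x ∂μ - (∫ x, exp (z x) ∂μ) * (w + 1) := by
    have hzz := hz.exp.mul hz
    have pointwise x : exp (z x) * expRemainder (w - z x)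
        = exp w + exp (z x) * z x - exp (z x) * (w + 1) := by
      rw [expRemainder, exp_sub]
      field_simp
      ring
    simp only [pointwise]
    rw [integral_sub (((BddMeas.const _).add hzz).integrable μ)
      ((hz.exp.mul (.const _)).integrable μ), integral_add (integrable_const _) (hzz.integrable μ),
      integral_mul_const]
    simp
  rw [entropy_exp, expand]
  set M := ∫ x, exp (z x) ∂μ
  have tangent : M * (w - log M + 1) ≤ exp w := by
    calc M * (w - log M + 1) ≤ M * exp (w - log M) := by gcongr; exact add_one_le_exp _
      _ = exp w := by rw [exp_sub, exp_log hM, mul_div_cancel₀ _ hM.ne']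
  linarith

lemma entropy_prod_exp {z : α × β → ℝ} (hz : BddMeas z) :
    entropy (μ.prod ν) (fun p => exp (z p))
      = ∫ x, entropy ν (fun y => exp (z (x, y))) ∂μ
        + entropy μ (fun x => ∫ y, exp (z (x, y)) ∂ν) := by
  have hzz := hz.exp.mul hz
  simp only [entropy_exp]
  rw [integral_sub ((hzz.integral_right ν).integrable μ)
    (((hz.exp.integral_right ν).mul (hz.log_integral_exp ν)).integrable μ),
    integral_prod _ (hzz.integrable _), integral_prod _ (hz.exp.integrable _), entropy]
  ring

/-- Convexity of entropy: apply the duality formula on each section with test function `log G`,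
where `G` is the averaged function. -/
lemma entropy_integral_exp_le {z : α × β → ℝ} (hz : BddMeas z) :
    entropy μ (fun x => ∫ y, exp (z (x, y)) ∂ν)
      ≤ ∫ y, entropy μ (fun x => exp (z (x, y))) ∂ν := by
  set G : α → ℝ := fun x => ∫ y, exp (z (x, y)) ∂ν
  have hswap : BddMeas (fun p : β × α => z (p.2, p.1)) := hz.comp measurable_swap
  have hlogG : BddMeas (fun x => log (G x)) := hz.log_integral_exp ν
  have exp_logG x : exp (log (G x)) = G x :=
    exp_log (integral_exp_pos ((hz.prodMk_left x).exp.integrable ν))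
  have duality y : ∫ x, exp (z (x, y)) * log (G x) ∂μ
      ≤ entropy μ (fun x => exp (z (x, y))) + (∫ x, exp (z (x, y)) ∂μ) * log (∫ x, G x ∂μ) := by
    simpa only [exp_logG] using integral_exp_mul_le_entropy_add (hz.prodMk_right y) hlogG
  have hent : BddMeas (fun y => entropy μ (fun x => exp (z (x, y)))) := hswap.entropy_exp
  have hmass := (hswap.exp.integral_right μ).mul (.const (log (∫ x, G x ∂μ)))
  have hcross : BddMeas (fun p : β × α => exp (z (p.2, p.1)) * log (G p.2)) :=
    hswap.exp.mul (hlogG.comp measurable_snd)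
  have integrated := integral_mono ((hcross.integral_right μ).integrable ν)
    ((hent.add hmass).integrable ν) duality
  rw [integral_add (hent.integrable ν) (hmass.integrable ν), integral_mul_const,
    integral_integral_swap (f := fun y x => exp (z (x, y)) * log (G x)) (hcross.integrable _),
    integral_integral_swap (f := fun y x => exp (z (x, y))) (hswap.exp.integrable _)] at integrated
  simp only [integral_mul_const] at integrated
  rw [entropy]
  linarith

lemma entropy_prod_exp_le {z : α × β → ℝ} (hz : BddMeas z) :
    entropy (μ.prod ν) (fun p => exp (z p))
      ≤ ∫ y, entropy μ (fun x => exp (z (x, y))) ∂ν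
        + ∫ x, entropy ν (fun y => exp (z (x, y))) ∂μ := by
  rw [entropy_prod_exp hz, add_comm]
  gcongr
  exact entropy_integral_exp_le hz

lemma measurePreserving_finCons {n : ℕ} {X : Fin (n + 1) → Type*} [∀ i, MeasurableSpace (X i)]
    (μ : ∀ i, Measure (X i)) [∀ i, IsProbabilityMeasure (μ i)] :
    MeasurePreserving (fun p : X 0 × (∀ i : Fin n, X i.succ) => (Fin.cons p.1 p.2 : ∀ i, X i))
      ((μ 0).prod (Measure.pi fun i : Fin n => μ i.succ)) (Measure.pi μ) := by
  have hmeas : Measurable (fun p : X 0 × (∀ i : Fin n, X i.succ) =>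
      (Fin.cons p.1 p.2 : ∀ i, X i)) :=
    measurable_pi_lambda _ (Fin.cases measurable_fst fun i =>
      (measurable_pi_apply i).comp measurable_snd)
  refine ⟨hmeas, (Measure.pi_eq fun s hs => ?_).symm⟩
  have preimage : (fun p : X 0 × (∀ i : Fin n, X i.succ) => (Fin.cons p.1 p.2 : ∀ i, X i)) ⁻¹'
      Set.univ.pi s = s 0 ×ˢ Set.univ.pi fun i : Fin n => s i.succ := by
    ext p
    simp [Fin.forall_fin_succ]
  rw [Measure.map_apply hmeas (.univ_pi hs), preimage, Measure.prod_prod, Measure.pi_pi,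
    Fin.prod_univ_succ]

lemma BddMeas.integral_pi_succ {n : ℕ} {X : Fin (n + 1) → Type*} [∀ i, MeasurableSpace (X i)]
    {μ : ∀ i, Measure (X i)} [∀ i, IsProbabilityMeasure (μ i)] {g : (∀ i, X i) → ℝ}
    (hg : BddMeas g) :
    ∫ S, g S ∂Measure.pi μ
      = ∫ x, ∫ T, g (Fin.cons x T) ∂(Measure.pi fun i : Fin n => μ i.succ) ∂μ 0 := by
  have hcons := measurePreserving_finCons μ
  rw [← hg.integral_comp hcons, integral_prod _ ((hg.comp hcons.measurable).integrable _)]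

lemma measurePreserving_update {κ : Type*} [Fintype κ] [DecidableEq κ] {X : κ → Type*}
    [∀ k, MeasurableSpace (X k)] (μ : ∀ k, Measure (X k)) [∀ k, IsProbabilityMeasure (μ k)]
    (i : κ) :
    MeasurePreserving (fun p : (∀ k, X k) × X i => update p.1 i p.2)
      ((Measure.pi μ).prod (μ i)) (Measure.pi μ) := by
  refine ⟨measurable_update', (Measure.pi_eq fun s hs => ?_).symm⟩
  have preimage : (fun p : (∀ k, X k) × X i => update p.1 i p.2) ⁻¹' Set.univ.pi s
      = Set.univ.pi (update s i Set.univ) ×ˢ s i := by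
    ext ⟨S, x⟩
    simp only [Set.mem_preimage, Set.mem_pi, Set.mem_univ, true_imp_iff, Set.mem_prod]
    rw [forall_update_iff S (fun k y => y ∈ s k), forall_update_iff s (fun k t => S k ∈ t)]
    simp [and_comm]
  rw [Measure.map_apply measurable_update' (.univ_pi hs), preimage, Measure.prod_prod,
    Measure.pi_pi, ← Finset.mul_prod_erase _ (fun k => μ k (s k)) (Finset.mem_univ i),
    ← Finset.mul_prod_erase _ (fun k => μ k (update s i Set.univ k)) (Finset.mem_univ i),
    update_self, measure_univ, one_mul, mul_comm]
  congr 1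
  refine Finset.prod_congr rfl fun k hk => ?_
  rw [update_of_ne (Finset.ne_of_mem_erase hk)]

lemma entropy_pi_exp_le_sum {n : ℕ} {X : Fin n → Type*} [∀ i, MeasurableSpace (X i)]
    (μ : ∀ i, Measure (X i)) [∀ i, IsProbabilityMeasure (μ i)] {Z : (∀ i, X i) → ℝ}
    (hZ : BddMeas Z) :
    entropy (Measure.pi μ) (fun S => exp (Z S))
      ≤ ∑ i, ∫ S, entropy (μ i) (fun x => exp (Z (update S i x))) ∂Measure.pi μ := by
  induction n with
  | zero =>
    simp [entropy_exp, Measure.pi_of_empty μ]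
  | succ n ih =>
    have hcons := measurePreserving_finCons μ
    have hsection (i : Fin (n + 1)) :
        BddMeas (fun S => entropy (μ i) (fun x => exp (Z (update S i x)))) :=
      (hZ.comp (measurePreserving_update μ i).measurable).entropy_exp
    have hZcons := hZ.comp hcons.measurable
    have transport : entropy (Measure.pi μ) (fun S => exp (Z S))
        = entropy ((μ 0).prod (Measure.pi fun i : Fin n => μ i.succ))
          (fun p => exp (Z (Fin.cons p.1 p.2))) := by
      rw [entropy_exp, entropy_exp, ← hZ.exp.integral_comp hcons,
        ← (hZ.exp.mul hZ).integral_comp hcons]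
    have htail (i : Fin n) : BddMeas (fun p : X 0 × (∀ i : Fin n, X i.succ) =>
        entropy (μ i.succ) (fun x => exp (Z (Fin.cons p.1 (update p.2 i x))))) := by
      simpa only [Fin.cons_update] using (hsection i.succ).comp hcons.measurable
    rw [transport, Fin.sum_univ_succ]
    simp only [(hsection _).integral_pi_succ, Fin.update_cons_zero, ← Fin.cons_update,
      integral_const, probReal_univ, one_smul]
    rw [← integral_finsetSum _ fun i _ => ((htail i).integral_right _).integrable _]
    refine (entropy_prod_exp_le hZcons).trans (add_le_add_right ?_ _)
    exact integral_mono (hZcons.entropy_exp.integrable _)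
      ((BddMeas.sum _ fun i => (htail i).integral_right _).integrable _)
      fun x₀ => ih (fun i => μ i.succ) (hZcons.prodMk_left x₀)

lemma entropy_pi_exp_le_sum_expRemainder {n : ℕ} {X : Fin n → Type*} [∀ i, MeasurableSpace (X i)]
    (μ : ∀ i, Measure (X i)) [∀ i, IsProbabilityMeasure (μ i)] {Z : (∀ i, X i) → ℝ}
    {W : Fin n → (∀ i, X i) → ℝ} (hZ : BddMeas Z) (hW : ∀ i, BddMeas (W i))
    (hWi : ∀ i S x, W i (update S i x) = W i S) :
    entropy (Measure.pi μ) (fun S => exp (Z S))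
      ≤ ∑ i, ∫ S, exp (Z S) * expRemainder (W i S - Z S) ∂Measure.pi μ := by
  refine (entropy_pi_exp_le_sum μ hZ).trans (Finset.sum_le_sum fun i _ => ?_)
  have hupdate := measurePreserving_update μ i
  have hZupdate := hZ.comp hupdate.measurable
  have hrem : BddMeas (fun S => exp (Z S) * expRemainder (W i S - Z S)) :=
    hZ.exp.mul ((((hW i).sub hZ).exp.sub ((hW i).sub hZ)).sub (.const 1))
  rw [← hrem.integral_comp hupdate, integral_prod _ ((hrem.comp hupdate.measurable).integrable _)]
  refine integral_mono (hZupdate.entropy_exp.integrable _)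
    (((hrem.comp hupdate.measurable).integral_right _).integrable _) fun S => ?_
  simp only [hWi]
  exact entropy_exp_le_integral_expRemainder (hZupdate.prodMk_left S) (W i S)

end Entropy

section Chernoff

open Filter ProbabilityTheory Real Topology

/-- The hypothesis says that `L / (exp - 1)` is antitone on the negative half-line; its limit at `0`
is `L' 0`. -/
lemma le_exp_sub_one_mul_of_deriv_le {L L' : ℝ → ℝ} (hL : ∀ s, HasDerivAt L (L' s) s)
    (hL₀ : L 0 = 0) (hle : ∀ s < 0, (1 - exp (-s)) * L' s ≤ L s) {t : ℝ} (ht : t < 0) :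
    L t ≤ (exp t - 1) * L' 0 := by
  have hneg {s : ℝ} (hs : s < 0) : exp s - 1 < 0 := by simpa using hs
  have hderiv {s : ℝ} (hs : s < 0) : HasDerivAt (fun s => L s / (exp s - 1))
      ((L' s * (exp s - 1) - L s * exp s) / (exp s - 1) ^ 2) s :=
    (hL s).div ((hasDerivAt_exp s).sub_const 1) (hneg hs).ne
  have anti : AntitoneOn (fun s => L s / (exp s - 1)) (Set.Iio 0) := by
    refine antitoneOn_of_deriv_nonpos (convex_Iio 0)
      (fun s hs => (hderiv hs).continuousAt.continuousWithinAt) ?_ ?_ <;>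
        simp only [interior_Iio]
    · exact fun s hs => (hderiv hs).differentiableAt.differentiableWithinAt
    intro s hs
    rw [(hderiv hs).deriv]
    refine div_nonpos_of_nonpos_of_nonneg ?_ (sq_nonneg _)
    have hexp : exp s * exp (-s) = 1 := by rw [← exp_add, add_neg_cancel, exp_zero]
    calc L' s * (exp s - 1) - L s * exp s
        = exp s * ((1 - exp (-s)) * L' s - L s) := by linear_combination L' s * hexp
      _ ≤ 0 := mul_nonpos_of_nonneg_of_nonpos (exp_pos s).le (sub_nonpos.2 (hle s hs))
  have limit : Tendsto (fun s => L s / (exp s - 1)) (𝓝[<] 0) (𝓝 (L' 0)) := by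
    have slopes := ((hasDerivAt_iff_tendsto_slope.1 (hL 0)).div
      (hasDerivAt_iff_tendsto_slope.1 (hasDerivAt_exp 0)) (exp_ne_zero 0)).mono_left
      (nhdsLT_le_nhdsNE 0)
    rw [exp_zero, div_one] at slopes
    refine slopes.congr' (eventually_mem_nhdsWithin.mono fun s hs => ?_)
    simp only [Pi.div_apply, slope_def_field, hL₀, exp_zero, sub_zero]
    exact div_div_div_cancel_right₀ (ne_of_lt hs) _ _
  have hquot : L' 0 ≤ L t / (exp t - 1) :=
    le_of_tendsto limit <| eventually_of_mem (Ioo_mem_nhdsLT ht) fun s hs => anti ht hs.2 hs.1.le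
  have := (le_div_iff_of_neg (hneg ht)).1 hquot
  linarith

lemma measureReal_le_exp_neg_mul_hfun {Ω : Type*} [MeasurableSpace Ω] {P : Measure Ω}
    [IsFiniteMeasure P] {Y : Ω → ℝ} {v u : ℝ}
    (hint : ∀ t < 0, Integrable (fun ω => exp (t * Y ω)) P)
    (hcgf : ∀ t < 0, cgf Y P t ≤ (exp t - 1) * v) (hu₀ : 0 < u) (hu₁ : u ≤ 1) :
    P.real {ω | Y ω ≤ (1 - u) * v} ≤ exp (-(v * hfun (-u))) := by
  have chernoff {t : ℝ} (ht : t < 0) : P.real {ω | Y ω ≤ (1 - u) * v}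
      ≤ exp (-t * ((1 - u) * v) + (exp t - 1) * v) :=
    (measure_le_le_exp_cgf _ ht.le (hint t ht)).trans (exp_le_exp.2 (by gcongr; exact hcgf t ht))
  rcases hu₁.lt_or_eq with hu | rfl
  · have hexp : exp (log (1 - u)) = 1 - u := exp_log (by linarith)
    convert chernoff (t := log (1 - u)) (log_neg (by linarith) (by linarith)) using 2
    rw [hexp, hfun, ← sub_eq_add_neg]
    ring
  · have limit : Tendsto (fun t => exp (-t * ((1 - 1) * v) + (exp t - 1) * v)) atBot
        (𝓝 (exp ((0 - 1) * v))) := by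
      simp only [sub_self, zero_mul, mul_zero, zero_add]
      exact (continuous_exp.tendsto _).comp ((tendsto_exp_atBot.sub_const 1).mul_const v)
    have hlimit : exp ((0 - 1) * v) = exp (-(v * hfun (-1))) := by simp [hfun]
    exact hlimit ▸ ge_of_tendsto limit ((eventually_lt_atBot 0).mono fun t => chernoff)

/-- With `1 - u = exp (-s)` this is `s ≤ sinh s`. -/
lemma sq_div_two_le_hfun_neg {u : ℝ} (hu₀ : 0 ≤ u) (hu₁ : u ≤ 1) : u ^ 2 / 2 ≤ hfun (-u) := by
  rcases hu₁.lt_or_eq with hu | rfl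
  · have hpos : 0 < 1 - u := by linarith
    have hs : 0 ≤ -log (1 - u) := neg_nonneg.2 (log_nonpos hpos.le (by linarith))
    have hsinh := mul_le_mul_of_nonneg_left (self_le_sinh_iff.2 hs) hpos.le
    rw [sinh_eq, neg_neg, exp_neg, exp_log hpos, mul_div_assoc', mul_sub,
      mul_inv_cancel₀ hpos.ne'] at hsinh
    rw [hfun, ← sub_eq_add_neg]
    linarith
  · norm_num [hfun]

end Chernoff

section SelfBounding

open Function ProbabilityTheory Real

/-- A self-bounding function in the sense of Boucheron, Lugosi and Massart: each `W i` is an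
approximation of `Z` that does not depend on the `i`-th coordinate. -/
structure IsSelfBounding {κ : Type*} [Fintype κ] [DecidableEq κ] {X : κ → Type*}
    (Z : (∀ i, X i) → ℝ) (W : κ → (∀ i, X i) → ℝ) : Prop where
  update_eq : ∀ i S x, W i (update S i x) = W i S
  le : ∀ i S, W i S ≤ Z S
  sub_le_one : ∀ i S, Z S - W i S ≤ 1
  sum_sub_le : ∀ S, ∑ i, (Z S - W i S) ≤ Z S

namespace IsSelfBounding

variable {n : ℕ} {X : Fin n → Type*} [∀ i, MeasurableSpace (X i)] {μ : ∀ i, Measure (X i)}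
  [∀ i, IsProbabilityMeasure (μ i)] {Z : (∀ i, X i) → ℝ} {W : Fin n → (∀ i, X i) → ℝ}

lemma entropy_exp_mul_le (h : IsSelfBounding Z W) (hZ : BddMeas Z)
    (hW : ∀ i, BddMeas (W i)) (t : ℝ) :
    entropy (Measure.pi μ) (fun S => exp (t * Z S))
      ≤ expRemainder (-t) * ∫ S, Z S * exp (t * Z S) ∂Measure.pi μ := by
  have hexp := (hZ.const_mul t).exp
  have hrem (i : Fin n) :
      BddMeas (fun S => exp (t * Z S) * expRemainder (t * W i S - t * Z S)) :=
    have hdiff := ((hW i).const_mul t).sub (hZ.const_mul t)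
    hexp.mul ((hdiff.exp.sub hdiff).sub (.const 1))
  have summand S (i : Fin n) : exp (t * Z S) * expRemainder (t * W i S - t * Z S)
      ≤ exp (t * Z S) * ((Z S - W i S) * expRemainder (-t)) := by
    rw [show t * W i S - t * Z S = (Z S - W i S) * -t by ring]
    gcongr
    exact expRemainder_mul_le (sub_nonneg.2 (h.le i S)) (h.sub_le_one i S) _
  refine (entropy_pi_exp_le_sum_expRemainder μ (hZ.const_mul t) (fun i => (hW i).const_mul t)
    fun i S x => by rw [h.update_eq]).trans ?_
  rw [← integral_finsetSum _ fun i _ => (hrem i).integrable _, ← integral_const_mul]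
  refine integral_mono ((BddMeas.sum _ hrem).integrable _)
    (((hZ.mul hexp).const_mul _).integrable _) fun S => ?_
  calc ∑ i, exp (t * Z S) * expRemainder (t * W i S - t * Z S)
      ≤ ∑ i, exp (t * Z S) * ((Z S - W i S) * expRemainder (-t)) :=
        Finset.sum_le_sum fun i _ => summand S i
    _ = exp (t * Z S) * ((∑ i, (Z S - W i S)) * expRemainder (-t)) := by
        rw [Finset.sum_mul, Finset.mul_sum]
    _ ≤ exp (t * Z S) * (Z S * expRemainder (-t)) := by
        gcongr
        exacts [expRemainder_nonneg _, h.sum_sub_le S]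
    _ = expRemainder (-t) * (Z S * exp (t * Z S)) := by ring

lemma cgf_le (h : IsSelfBounding Z W) (hZ : BddMeas Z) (hW : ∀ i, BddMeas (W i))
    {t : ℝ} (ht : t < 0) :
    cgf Z (Measure.pi μ) t ≤ (exp t - 1) * ∫ S, Z S ∂Measure.pi μ := by
  set P := Measure.pi μ
  have hint (s : ℝ) : Integrable (fun S => exp (s * Z S)) P := (hZ.const_mul s).exp.integrable P
  have hmgf (s : ℝ) : HasDerivAt (mgf Z P) (∫ S, Z S * exp (s * Z S) ∂P) s :=
    hasDerivAt_mgf (by simp [integrableExpSet, hint])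
  have hmgf_pos (s : ℝ) : 0 < mgf Z P s := mgf_pos (hint s)
  have hcgf (s : ℝ) : HasDerivAt (cgf Z P) ((∫ S, Z S * exp (s * Z S) ∂P) / mgf Z P s) s :=
    (hmgf s).log (hmgf_pos s).ne'
  have cgf_bound := le_exp_sub_one_mul_of_deriv_le hcgf cgf_zero (fun s _ => ?_) ht
  · simpa using cgf_bound
  rw [← mul_div_assoc, div_le_iff₀ (hmgf_pos s)]
  have entropy_le := h.entropy_exp_mul_le (μ := μ) hZ hW s
  have hmul : ∫ S, exp (s * Z S) * (s * Z S) ∂P = s * ∫ S, Z S * exp (s * Z S) ∂P := by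
    rw [← integral_const_mul]
    congr with S
    ring
  rw [entropy_exp, hmul] at entropy_le
  simp only [expRemainder] at entropy_le
  change _ ≤ log (∫ S, exp (s * Z S) ∂P) * ∫ S, exp (s * Z S) ∂P
  linarith

lemma measureReal_le (h : IsSelfBounding Z W) (hZ : BddMeas Z) (hW : ∀ i, BddMeas (W i))
    {u : ℝ} (hu₀ : 0 < u) (hu₁ : u ≤ 1) :
    (Measure.pi μ).real {S | Z S ≤ (1 - u) * ∫ S, Z S ∂Measure.pi μ}
      ≤ exp (-((∫ S, Z S ∂Measure.pi μ) * hfun (-u))) :=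
  measureReal_le_exp_neg_mul_hfun (fun t _ => (hZ.const_mul t).exp.integrable _)
    (fun _ => h.cgf_le hZ hW) hu₀ hu₁

end IsSelfBounding

end SelfBounding

section Rademacher

open Finset Function
open scoped BigOperators

/-- The unnormalized supremum `sup_l ∑_{k ∈ s} θ_k v_{l,k}` of a family of vectors (the restrictions
of the functions of the class to the sample) over the coordinates in `s`. -/
def radSup {ι κ : Type*} (v : ι → κ → ℝ) (s : Finset κ) (θ : κ → Bool) : ℝ :=
  ⨆ l, ∑ k ∈ s, sgnB (θ k) * v l k

/-- The unnormalized Rademacher average `E_θ sup_l ∑_{k ∈ s} θ_k v_{l,k}`. -/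
def radAvg {ι κ : Type*} [Fintype κ] [DecidableEq κ] (v : ι → κ → ℝ) (s : Finset κ) : ℝ :=
  𝔼 θ : κ → Bool, radSup v s θ

variable {ι κ : Type*} {v : ι → κ → ℝ} {a b : ℝ}

lemma abs_sgnB_mul (β : Bool) (x : ℝ) : |sgnB β * x| = |x| := by
  cases β <;> simp [sgnB]

lemma abs_sum_sgnB_mul_le (hv : ∀ l k, v l k ∈ Set.Icc a b) (s : Finset κ) (θ : κ → Bool) (l : ι) :
    |∑ k ∈ s, sgnB (θ k) * v l k| ≤ #s * max |a| |b| := by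
  rw [← nsmul_eq_mul]
  refine (abs_sum_le_sum_abs _ _).trans (sum_le_card_nsmul _ _ _ fun k _ => ?_)
  rw [abs_sgnB_mul]
  exact abs_le_max_abs_abs (hv l k).1 (hv l k).2

lemma le_radSup (hv : ∀ l k, v l k ∈ Set.Icc a b) (s : Finset κ) (θ : κ → Bool) (l : ι) :
    ∑ k ∈ s, sgnB (θ k) * v l k ≤ radSup v s θ :=
  le_ciSup (f := fun l => ∑ k ∈ s, sgnB (θ k) * v l k)
    ⟨_, Set.forall_mem_range.2 fun l => (abs_le.1 (abs_sum_sgnB_mul_le hv s θ l)).2⟩ l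

lemma abs_radSup_le [Nonempty ι] (hv : ∀ l k, v l k ∈ Set.Icc a b) (s : Finset κ) (θ : κ → Bool) :
    |radSup v s θ| ≤ #s * max |a| |b| := by
  have hsum l := abs_le.1 (abs_sum_sgnB_mul_le hv s θ l)
  obtain ⟨l₀⟩ := ‹Nonempty ι›
  exact abs_le.2 ⟨(hsum l₀).1.trans (le_radSup hv s θ l₀), ciSup_le fun l => (hsum l).2⟩

lemma sum_radSup_sub_radSup_erase_le [Nonempty ι] [DecidableEq κ]
    (hv : ∀ l k, v l k ∈ Set.Icc a b) (s : Finset κ) (θ : κ → Bool) :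
    ∑ i ∈ s, (radSup v s θ - radSup v (s.erase i) θ) ≤ radSup v s θ := by
  rcases s.eq_empty_or_nonempty with rfl | hs
  · simp [radSup]
  have hcard : (0 : ℝ) ≤ #s - 1 := sub_nonneg.2 (by exact_mod_cast hs.card_pos)
  have leave_one_out : (#s - 1) * radSup v s θ ≤ ∑ i ∈ s, radSup v (s.erase i) θ := by
    rw [radSup, Real.mul_iSup_of_nonneg hcard]
    refine ciSup_le fun l => ?_
    calc (#s - 1) * ∑ k ∈ s, sgnB (θ k) * v l k
        = ∑ i ∈ s, ∑ k ∈ s.erase i, sgnB (θ k) * v l k := by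
          rw [sum_congr rfl fun i hi => sum_erase_eq_sub hi, sum_sub_distrib, sum_const,
            nsmul_eq_mul, sub_one_mul]
      _ ≤ ∑ i ∈ s, radSup v (s.erase i) θ := sum_le_sum fun i _ => le_radSup hv _ θ l
  rw [sum_sub_distrib, sum_const, nsmul_eq_mul]
  linarith

variable [DecidableEq κ]

/-- The sign vector `θ` with its `i`-th sign flipped. -/
def flipSign (i : κ) (θ : κ → Bool) : κ → Bool := update θ i (!θ i)

lemma flipSign_involutive (i : κ) : Involutive (flipSign i) := fun θ => by simp [flipSign]

lemma sum_sgnB_mul_eq_add_erase {s : Finset κ} {i : κ} (hi : i ∈ s) (θ : κ → Bool) (x : κ → ℝ) :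
    ∑ k ∈ s, sgnB (θ k) * x k = sgnB (θ i) * x i + ∑ k ∈ s.erase i, sgnB (θ k) * x k :=
  (add_sum_erase s _ hi).symm

lemma sum_sgnB_flipSign_mul {s : Finset κ} {i : κ} (hi : i ∈ s) (θ : κ → Bool) (x : κ → ℝ) :
    ∑ k ∈ s, sgnB (flipSign i θ k) * x k
      = -(sgnB (θ i) * x i) + ∑ k ∈ s.erase i, sgnB (θ k) * x k := by
  rw [sum_sgnB_mul_eq_add_erase hi]
  congr 1
  · cases h : θ i <;> simp [flipSign, h, sgnB]
  · exact sum_congr rfl fun k hk => by rw [flipSign, update_of_ne (ne_of_mem_erase hk)]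

lemma two_mul_radSup_erase_le [Nonempty ι] (hv : ∀ l k, v l k ∈ Set.Icc a b) {s : Finset κ} {i : κ}
    (hi : i ∈ s) (θ : κ → Bool) :
    2 * radSup v (s.erase i) θ ≤ radSup v s θ + radSup v s (flipSign i θ) := by
  suffices radSup v (s.erase i) θ ≤ (radSup v s θ + radSup v s (flipSign i θ)) / 2 by linarith
  refine ciSup_le fun l => ?_
  have hθ := le_radSup hv s θ l
  have hflip := le_radSup hv s (flipSign i θ) l
  rw [sum_sgnB_mul_eq_add_erase hi] at hθ
  rw [sum_sgnB_flipSign_mul hi] at hflip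
  linarith

lemma radSup_add_radSup_flipSign_le [Nonempty ι] (hv : ∀ l k, v l k ∈ Set.Icc a b) {s : Finset κ}
    {i : κ} (hi : i ∈ s) (θ : κ → Bool) :
    radSup v s θ + radSup v s (flipSign i θ) ≤ 2 * radSup v (s.erase i) θ + (b - a) := by
  refine ciSup_add_ciSup_le fun l l' => ?_
  rw [sum_sgnB_mul_eq_add_erase hi, sum_sgnB_flipSign_mul hi]
  have hdiff : sgnB (θ i) * (v l i - v l' i) ≤ b - a :=
    calc sgnB (θ i) * (v l i - v l' i) ≤ |v l i - v l' i| :=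
          (le_abs_self _).trans_eq (abs_sgnB_mul _ _)
      _ ≤ b - a := Real.dist_le_of_mem_Icc (hv l i) (hv l' i)
  linarith [le_radSup hv (s.erase i) θ l, le_radSup hv (s.erase i) θ l']

variable [Fintype κ]

lemma two_mul_radAvg (v : ι → κ → ℝ) (s : Finset κ) (i : κ) :
    2 * radAvg v s = 𝔼 θ, (radSup v s θ + radSup v s (flipSign i θ)) := by
  rw [expect_add_distrib, two_mul]
  congr 1
  exact Fintype.expect_equiv (flipSign_involutive i).toPerm _ _ fun θ => by
    simp [(flipSign_involutive i) θ]

lemma radAvg_erase_le [Nonempty ι] (hv : ∀ l k, v l k ∈ Set.Icc a b) {s : Finset κ} {i : κ}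
    (hi : i ∈ s) : radAvg v (s.erase i) ≤ radAvg v s := by
  have := expect_le_expect (s := univ) fun θ _ => two_mul_radSup_erase_le hv hi θ
  rw [← two_mul_radAvg, ← mul_expect] at this
  exact le_of_mul_le_mul_left this two_pos

lemma radAvg_le_radAvg_erase_add [Nonempty ι] (hv : ∀ l k, v l k ∈ Set.Icc a b) {s : Finset κ}
    {i : κ} (hi : i ∈ s) : radAvg v s ≤ radAvg v (s.erase i) + (b - a) / 2 := by
  have := expect_le_expect (s := univ) fun θ _ => radSup_add_radSup_flipSign_le hv hi θ
  rw [← two_mul_radAvg, expect_add_distrib, ← mul_expect, Fintype.expect_const] at this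
  change _ ≤ 2 * radAvg v (s.erase i) + _ at this
  linarith

lemma sum_radAvg_sub_radAvg_erase_le [Nonempty ι] (hv : ∀ l k, v l k ∈ Set.Icc a b)
    (s : Finset κ) : ∑ i ∈ s, (radAvg v s - radAvg v (s.erase i)) ≤ radAvg v s := by
  simp only [radAvg, ← expect_sub_distrib]
  rw [← expect_sum_comm]
  exact expect_le_expect fun θ _ => sum_radSup_sub_radSup_erase_le hv s θ

variable {X : Type*} {f : ι → X → ℝ}

lemma isSelfBounding_radAvg [Nonempty ι] (hf : ∀ l x, f l x ∈ Set.Icc a b) {c : ℝ} (hc : 0 < c)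
    (hbc : b - a ≤ 2 * c) :
    IsSelfBounding (fun S : κ → X => c⁻¹ * radAvg (fun l k => f l (S k)) univ)
      (fun i S => c⁻¹ * radAvg (fun l k => f l (S k)) (univ.erase i)) where
  update_eq i S x := by
    have hsum l (θ : κ → Bool) : ∑ k ∈ univ.erase i, sgnB (θ k) * f l (update S i x k)
        = ∑ k ∈ univ.erase i, sgnB (θ k) * f l (S k) :=
      sum_congr rfl fun k hk => by rw [update_of_ne (ne_of_mem_erase hk)]
    simp only [radAvg, radSup, hsum]
  le i S := by
    gcongr
    exact radAvg_erase_le (fun l k => hf l (S k)) (mem_univ i)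
  sub_le_one i S := by
    have := radAvg_le_radAvg_erase_add (fun l k => hf l (S k)) (mem_univ i)
    rw [← mul_sub, inv_mul_le_iff₀ hc]
    linarith
  sum_sub_le S := by
    simp only [← mul_sub]
    rw [← mul_sum]
    gcongr
    exact sum_radAvg_sub_radAvg_erase_le (fun l k => hf l (S k)) univ

lemma bddMeas_radAvg [MeasurableSpace X] [Countable ι] [Nonempty ι]
    (hmeas : ∀ l, Measurable (f l)) (hf : ∀ l x, f l x ∈ Set.Icc a b) (s : Finset κ) :
    BddMeas (fun S : κ → X => radAvg (fun l k => f l (S k)) s) := by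
  have hradSup (θ : κ → Bool) : BddMeas (fun S : κ → X => radSup (fun l k => f l (S k)) s θ) :=
    ⟨.iSup fun l => Finset.measurable_sum _ fun k _ =>
      ((hmeas l).comp (measurable_pi_apply k)).const_mul _, _,
      fun S => abs_radSup_le (fun l k => hf l (S k)) s θ⟩
  simpa only [radAvg, Fintype.expect_eq_sum_div_card, div_eq_inv_mul] using
    (BddMeas.sum univ hradSup).const_mul _

lemma era_one_eq (f : ι → X → ℝ) {m : ℕ} (S : Fin m → X) :
    era f 1 m S = (m : ℝ)⁻¹ * radAvg (fun l k => f l (S k)) univ := by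
  rw [era, radMeasure, PMF.integral_eq_sum]
  simp only [mcera, PMF.uniformOfFintype_apply, ENNReal.toReal_inv, ENNReal.toReal_natCast,
    smul_eq_mul, Nat.cast_one, inv_one, one_mul, univ_unique, sum_singleton, ← mul_sum,
    ← Real.mul_iSup_of_nonneg (inv_nonneg.2 (Nat.cast_nonneg (α := ℝ) m))]
  rw [mul_left_comm]
  congr 1
  rw [← div_eq_inv_mul, ← Fintype.expect_eq_sum_div_card]
  exact Fintype.expect_equiv (Equiv.funUnique (Fin 1) (Fin m → Bool)) _ _ fun _ => rfl

end Rademacher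

theorem stmt_1_general {X : Type*} [MeasurableSpace X] {ι : Type*} [Countable ι] [Nonempty ι]
    (f : ι → X → ℝ) {a b c : ℝ} (hc : 0 < c) (hbc : b - a ≤ 2 * c)
    (hmeas : ∀ l : ι, Measurable (f l)) (hrange : ∀ (l : ι) (x : X), f l x ∈ Set.Icc a b)
    (μ : Measure X) [IsProbabilityMeasure μ] (m : ℕ) (hm : 0 < m)
    (ε : ℝ) (hε0 : 0 < ε) (hε : ε ≤ rc f 1 m μ) :
    ((Measure.pi fun _ : Fin m => μ)
        {S : Fin m → X | rc f 1 m μ ≥ era f 1 m S + ε}).toReal ≤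
      Real.exp (-((m : ℝ) * rc f 1 m μ / c) * hfun (-ε / rc f 1 m μ)) ∧
    Real.exp (-((m : ℝ) * rc f 1 m μ / c) * hfun (-ε / rc f 1 m μ)) ≤
      Real.exp (-((m : ℝ) * ε ^ 2) / (2 * c * rc f 1 m μ)) := by
  have hm' : (0 : ℝ) < m := Nat.cast_pos.2 hm
  set R := rc f 1 m μ with hR
  have hRpos : 0 < R := hε0.trans_le hε
  have hu₀ : 0 < ε / R := div_pos hε0 hRpos
  have hu₁ : ε / R ≤ 1 := (div_le_one hRpos).2 hε
  have hradAvg (S : Fin m → X) :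
      c⁻¹ * radAvg (fun l k => f l (S k)) Finset.univ = m / c * era f 1 m S := by
    rw [era_one_eq]
    field_simp
  have mean : ∫ S : Fin m → X, m / c * era f 1 m S ∂(Measure.pi fun _ => μ) = m * R / c := by
    rw [integral_const_mul, hR, rc]
    ring
  have event : {S : Fin m → X | R ≥ era f 1 m S + ε}
      = {S | m / c * era f 1 m S ≤ (1 - ε / R) * (m * R / c)} := by
    ext S
    have threshold : (1 - ε / R) * (m * R / c) = m / c * (R - ε) := by field_simp
    rw [Set.mem_ofPred_eq, Set.mem_ofPred_eq, threshold, mul_le_mul_iff_right₀ (div_pos hm' hc),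
      le_sub_iff_add_le]
  rw [neg_div R ε, neg_mul]
  constructor
  · have tail := (isSelfBounding_radAvg hrange hc hbc).measureReal_le (μ := fun _ : Fin m => μ)
      ((bddMeas_radAvg hmeas hrange _).const_mul _)
      (fun _ => (bddMeas_radAvg hmeas hrange _).const_mul _) hu₀ hu₁
    simp only [hradAvg, mean] at tail
    rwa [event, ← measureReal_def]
  · rw [Real.exp_le_exp, neg_div, neg_le_neg_iff]
    calc m * ε ^ 2 / (2 * c * R) = m * R / c * ((ε / R) ^ 2 / 2) := by field_simp
      _ ≤ m * R / c * hfun (-(ε / R)) := by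
        gcongr
        exact sq_div_two_le_hfun_neg hu₀.le hu₁

theorem stmt_1 {X : Type*} [MeasurableSpace X] {ι : Type*} [Countable ι]
    (f : ι → X → ℝ) (a b : ℝ) (ha : a ≤ 0) (hb : 0 < b)
    (hmeas : ∀ l : ι, Measurable (f l))
    (hrange : ∀ (l : ι) (x : X), f l x ∈ Set.Icc a b)
    (hzero : ∃ l₀ : ι, ∀ x : X, f l₀ x = 0)
    (μ : Measure X) [IsProbabilityMeasure μ] (m : ℕ) (hm : 0 < m)
    (ε : ℝ) (hε0 : 0 < ε) (hε : ε ≤ rc f 1 m μ) :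
    ((Measure.pi fun _ : Fin m => μ)
        {S : Fin m → X | rc f 1 m μ ≥ era f 1 m S + ε}).toReal ≤
      Real.exp (-((m : ℝ) * rc f 1 m μ / (b - a)) * hfun (-ε / rc f 1 m μ)) ∧
    Real.exp (-((m : ℝ) * rc f 1 m μ / (b - a)) * hfun (-ε / rc f 1 m μ)) ≤
      Real.exp (-((m : ℝ) * ε ^ 2) / (2 * (b - a) * rc f 1 m μ)) := by
  obtain ⟨l₀, -⟩ := hzero
  have : Nonempty ι := ⟨l₀⟩
  exact stmt_1_general f (by linarith) (by linarith) hmeas hrange μ m hm ε hε0 hε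
end
end
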